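/- For any p ≥ 1 and k ≥ 0, the (p,k)-RPW distance is a metric on the set of Borel probability measures on X: for all Borel probability measures μ, ν, κ on X, (i) RPW_{p,k}(μ, μ) = 0, (ii) RPW_{p,k}(μ, ν) > 0 whenever μ ≠ ν, (iii) RPW_{p,k}(μ, ν) = RPW_{p,k}(ν, μ), and (iv) RPW_{p,k}(μ, ν) ≤ RPW_{p,k}(μ, κ) + RPW_{p,k}(κ, ν). -/

import Mathlib

open MeasureTheory

noncomputable section

/-- `γ` is an `α`-partial transport plan from `μ` to `ν`: a Borel measure on `X × X` of
total mass `α` whose first marginal is dominated by `μ` and second marginal by `ν`. -/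
def IsPartialPlan {X : Type*} [MeasurableSpace X] (μ ν : Measure X) (α : ℝ)
    (γ : Measure (X × X)) : Prop :=
  γ Set.univ = ENNReal.ofReal α ∧ γ.map Prod.fst ≤ μ ∧ γ.map Prod.snd ≤ ν

/-- The cost `w_p(γ) = (∫ c(x,y)^p dγ)^(1/p)` of a transport plan. -/
def planCost {X : Type*} [MetricSpace X] [MeasurableSpace X] (p : ℝ)
    (γ : Measure (X × X)) : ℝ :=
  (∫ z, dist z.1 z.2 ^ p ∂γ) ^ (1 / p)

/-- The `α`-partial `p`-Wasserstein distance `W_{p,α}(μ, ν)`. -/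
def partialW {X : Type*} [MetricSpace X] [MeasurableSpace X] (p α : ℝ)
    (μ ν : Measure X) : ℝ :=
  sInf { c : ℝ | ∃ γ : Measure (X × X), IsPartialPlan μ ν α γ ∧ c = planCost p γ }

/-- The `(p,k)`-RPW distance: the least `ε ∈ [0,1]` with `W_{p,1-ε}(μ,ν) ≤ kε`. -/
def RPW {X : Type*} [MetricSpace X] [MeasurableSpace X] (p k : ℝ)
    (μ ν : Measure X) : ℝ :=
  sInf { ε : ℝ | ε ∈ Set.Icc (0:ℝ) 1 ∧ partialW p (1 - ε) μ ν ≤ k * ε }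

/-!
Two partial plans, from `μ` to `κ` and from `κ` to `ν`, of masses `α` and `β` have marginals on the
middle factor that are both dominated by the probability measure `κ`, so these overlap in mass at
least `α + β - 1`. Gluing the plans over the overlap and applying Minkowski's inequality gives
`W_{p,α+β-1}(μ, ν) ≤ W_{p,α}(μ, κ) + W_{p,β}(κ, ν)`; with `α = 1 - ε₁` and `β = 1 - ε₂` this is the
triangle inequality for RPW. Positivity comes from the Lévy–Prokhorov distance: Markov's inequality
for an almost optimal partial plan bounds it by `r + (k r)^(p/(p+1))`, where `r = RPW_{p,k}(μ, ν)`.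
-/

open ProbabilityTheory Filter Topology
open scoped ENNReal

lemma le_apply_of_forall_gt {α β : Type*} [TopologicalSpace α] [Preorder α] [TopologicalSpace β]
    [Preorder β] [OrderClosedTopology β] {f : α → β} {a : α} {b : β} [(𝓝[>] a).NeBot]
    (hf : ContinuousWithinAt f (Set.Ioi a) a) (h : ∀ x > a, b ≤ f x) : b ≤ f a :=
  ge_of_tendsto hf (eventually_mem_nhdsWithin.mono h)

lemma eq_of_levyProkhorovDist_eq_zero {Ω : Type*} [PseudoEMetricSpace Ω] [MeasurableSpace Ω]
    [BorelSpace Ω] {μ ν : Measure Ω} [IsProbabilityMeasure μ] [IsProbabilityMeasure ν]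
    (h : levyProkhorovDist μ ν = 0) : μ = ν := by
  let P : LevyProkhorov (ProbabilityMeasure Ω) := .ofMeasure ⟨μ, inferInstance⟩
  let Q : LevyProkhorov (ProbabilityMeasure Ω) := .ofMeasure ⟨ν, inferInstance⟩
  have hPQ : P = Q := eq_of_dist_eq_zero h
  exact congrArg (fun R ↦ (R.toMeasure : Measure Ω)) hPQ

section Gluing

variable {X Y Z : Type*} [MeasurableSpace X] [MeasurableSpace Y] [MeasurableSpace Z]

lemma exists_le_measure_univ_eq {m : Measure X} [IsFiniteMeasure m] {t : ℝ≥0∞}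
    (ht : t ≤ m Set.univ) : ∃ m' ≤ m, m' Set.univ = t := by
  rcases eq_or_ne (m Set.univ) 0 with hm | hm
  · exact ⟨m, le_rfl, hm.trans (nonpos_iff_eq_zero.1 (hm ▸ ht)).symm⟩
  · refine ⟨(t / m Set.univ) • m, fun s ↦ ?_, ENNReal.div_mul_cancel hm (measure_ne_top m _)⟩
    have hle : t / m Set.univ ≤ 1 := ENNReal.div_le_of_le_mul (by rwa [one_mul])
    exact mul_le_of_le_one_left zero_le hle

lemma measure_add_measure_le_inf_add {κ κ₁ κ₂ : Measure X} [IsFiniteMeasure κ]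
    (h₁ : κ₁ ≤ κ) (h₂ : κ₂ ≤ κ) (s : Set X) : κ₁ s + κ₂ s ≤ (κ₁ ⊓ κ₂) s + κ s := by
  have : IsFiniteMeasure κ₁ := isFiniteMeasure_of_le κ h₁
  have : IsFiniteMeasure κ₂ := isFiniteMeasure_of_le κ h₂
  have : IsFiniteMeasure (κ - κ₂) := isFiniteMeasure_of_le κ Measure.sub_le
  have hκ : κ - κ₂ + κ₂ = κ := Measure.sub_add_cancel_of_le h₂
  have hinf : κ₁ - (κ - κ₂) ≤ κ₁ ⊓ κ₂ :=
    le_inf Measure.sub_le (Measure.sub_le_of_le_add (by rwa [add_comm, hκ]))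
  calc κ₁ s + κ₂ s ≤ (κ₁ ⊓ κ₂ + (κ - κ₂)) s + κ₂ s := by
        gcongr
        exact Measure.sub_le_iff_le_add.1 hinf
    _ = (κ₁ ⊓ κ₂) s + (κ - κ₂ + κ₂) s := by simp only [Measure.add_apply, add_assoc]
    _ = (κ₁ ⊓ κ₂) s + κ s := by rw [hκ]

lemma exists_le_le_measure_univ_eq {κ κ₁ κ₂ : Measure X} [IsFiniteMeasure κ] (h₁ : κ₁ ≤ κ)
    (h₂ : κ₂ ≤ κ) {t : ℝ≥0∞} (ht : t + κ Set.univ ≤ κ₁ Set.univ + κ₂ Set.univ) :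
    ∃ m ≤ κ₁, m ≤ κ₂ ∧ m Set.univ = t := by
  have : IsFiniteMeasure (κ₁ ⊓ κ₂) := isFiniteMeasure_of_le κ (inf_le_left.trans h₁)
  have hinf : t ≤ (κ₁ ⊓ κ₂) Set.univ :=
    (ENNReal.add_le_add_iff_right (measure_ne_top κ _)).1
      (ht.trans (measure_add_measure_le_inf_add h₁ h₂ Set.univ))
  obtain ⟨m, hm, hm_univ⟩ := exists_le_measure_univ_eq hinf
  exact ⟨m, hm.trans inf_le_left, hm.trans inf_le_right, hm_univ⟩

lemma compProd_mono_left {m m' : Measure X} [SFinite m] [SFinite m'] (h : m ≤ m')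
    (K : Kernel X Y) [IsSFiniteKernel K] : m ⊗ₘ K ≤ m' ⊗ₘ K := by
  refine Measure.le_iff.2 fun s hs ↦ ?_
  rw [Measure.compProd_apply hs, Measure.compProd_apply hs]
  exact lintegral_mono' h le_rfl

lemma compProd_condKernel_le [StandardBorelSpace Y] [Nonempty Y] {γ : Measure (X × Y)}
    [IsFiniteMeasure γ] {m : Measure X} (hm : m ≤ γ.fst) : m ⊗ₘ γ.condKernel ≤ γ := by
  have : IsFiniteMeasure m := isFiniteMeasure_of_le _ hm
  exact (compProd_mono_left hm _).trans (γ.disintegrate γ.condKernel).le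

lemma map_fst_compProd_prod (m : Measure X) [SFinite m] (K₁ : Kernel X Y) (K₂ : Kernel X Z)
    [IsSFiniteKernel K₁] [IsMarkovKernel K₂] :
    (m ⊗ₘ (K₁ ×ₖ K₂)).map (fun w ↦ (w.1, w.2.1)) = m ⊗ₘ K₁ := by
  conv_rhs => rw [← Kernel.fst_prod K₁ K₂, Kernel.fst_eq, Measure.compProd_map measurable_fst]
  rfl

lemma map_snd_compProd_prod (m : Measure X) [SFinite m] (K₁ : Kernel X Y) (K₂ : Kernel X Z)
    [IsMarkovKernel K₁] [IsSFiniteKernel K₂] :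
    (m ⊗ₘ (K₁ ×ₖ K₂)).map (fun w ↦ (w.1, w.2.2)) = m ⊗ₘ K₂ := by
  conv_rhs => rw [← Kernel.snd_prod K₁ K₂, Kernel.snd_eq, Measure.compProd_map measurable_snd]
  rfl

-- `Γ` is the joint law of `(x, y, z)` with `x` drawn from `m` and `y`, `z` independent given `x`.
lemma exists_fst_eq_map_le_map_le [StandardBorelSpace Y] [Nonempty Y] [StandardBorelSpace Z]
    [Nonempty Z] {γ₁ : Measure (X × Y)} {γ₂ : Measure (X × Z)} [IsFiniteMeasure γ₁]
    [IsFiniteMeasure γ₂] {m : Measure X} (h₁ : m ≤ γ₁.fst) (h₂ : m ≤ γ₂.fst) :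
    ∃ Γ : Measure (X × Y × Z), Γ.fst = m ∧
      Γ.map (fun w ↦ (w.1, w.2.1)) ≤ γ₁ ∧ Γ.map (fun w ↦ (w.1, w.2.2)) ≤ γ₂ := by
  have : IsFiniteMeasure m := isFiniteMeasure_of_le _ h₁
  refine ⟨m ⊗ₘ (γ₁.condKernel ×ₖ γ₂.condKernel), Measure.fst_compProd _ _, ?_, ?_⟩
  · rw [map_fst_compProd_prod]
    exact compProd_condKernel_le h₁
  · rw [map_snd_compProd_prod]
    exact compProd_condKernel_le h₂

end Gluing

section PlanCost

variable {X : Type*} [MetricSpace X] [MeasurableSpace X] {p : ℝ}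

lemma planCost_nonneg (p : ℝ) (γ : Measure (X × X)) : 0 ≤ planCost p γ := by
  unfold planCost
  positivity

lemma planCost_zero (hp : 0 < p) : planCost p (0 : Measure (X × X)) = 0 := by
  rw [planCost, integral_zero_measure, Real.zero_rpow (one_div_ne_zero hp.ne')]

lemma planCost_rpow (hp : 0 < p) (γ : Measure (X × X)) :
    planCost p γ ^ p = ∫ z, dist z.1 z.2 ^ p ∂γ := by
  rw [planCost, one_div, Real.rpow_inv_rpow (by positivity) hp.ne']

variable [OpensMeasurableSpace X] [SecondCountableTopology X]

lemma aestronglyMeasurable_dist_rpow (p : ℝ) (γ : Measure (X × X)) :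
    AEStronglyMeasurable (fun z : X × X ↦ dist z.1 z.2 ^ p) γ :=
  (measurable_dist.pow_const p).aestronglyMeasurable

lemma planCost_map_swap (p : ℝ) (γ : Measure (X × X)) :
    planCost p (γ.map Prod.swap) = planCost p γ := by
  rw [planCost, integral_map measurable_swap.aemeasurable (aestronglyMeasurable_dist_rpow p _)]
  simp only [planCost, Prod.fst_swap, Prod.snd_swap, dist_comm]

lemma planCost_map_diag (hp : 0 < p) (μ : Measure X) :
    planCost p (μ.map fun x ↦ (x, x)) = 0 := by
  have hdiag : Measurable fun x : X ↦ (x, x) := by fun_prop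
  rw [planCost, integral_map hdiag.aemeasurable (aestronglyMeasurable_dist_rpow p _)]
  simp only [dist_self, Real.zero_rpow hp.ne', integral_zero,
    Real.zero_rpow (one_div_ne_zero hp.ne')]

variable [BoundedSpace X]

lemma memLp_dist (q : ℝ≥0∞) (γ : Measure (X × X)) [IsFiniteMeasure γ] :
    MemLp (fun z : X × X ↦ dist z.1 z.2) q γ := by
  refine MemLp.of_bound measurable_dist.aestronglyMeasurable (Metric.diam (Set.univ : Set X))
    (ae_of_all _ fun z ↦ ?_)
  rw [Real.norm_of_nonneg dist_nonneg]
  exact Metric.dist_le_diam_of_mem BoundedSpace.bounded_univ (Set.mem_univ _) (Set.mem_univ _)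

lemma ofReal_planCost_eq_eLpNorm (hp : 0 < p) (γ : Measure (X × X)) [IsFiniteMeasure γ] :
    ENNReal.ofReal (planCost p γ) =
      eLpNorm (fun z : X × X ↦ dist z.1 z.2) (ENNReal.ofReal p) γ := by
  rw [(memLp_dist _ γ).eLpNorm_eq_integral_rpow_norm (ENNReal.ofReal_pos.2 hp).ne'
    ENNReal.ofReal_ne_top, ENNReal.toReal_ofReal hp.le]
  simp only [planCost, one_div, Real.norm_of_nonneg dist_nonneg]

lemma planCost_mono (hp : 0 < p) {γ γ' : Measure (X × X)} [IsFiniteMeasure γ'] (h : γ ≤ γ') :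
    planCost p γ ≤ planCost p γ' := by
  have : IsFiniteMeasure γ := isFiniteMeasure_of_le _ h
  rw [← ENNReal.ofReal_le_ofReal_iff (planCost_nonneg p γ'), ofReal_planCost_eq_eLpNorm hp,
    ofReal_planCost_eq_eLpNorm hp]
  exact eLpNorm_mono_measure _ h

lemma ofReal_planCost_map {W : Type*} [MeasurableSpace W] (hp : 0 < p) (Γ : Measure W)
    [IsFiniteMeasure Γ] {f : W → X × X} (hf : Measurable f) :
    ENNReal.ofReal (planCost p (Γ.map f)) =
      eLpNorm (fun w ↦ dist (f w).1 (f w).2) (ENNReal.ofReal p) Γ := by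
  rw [ofReal_planCost_eq_eLpNorm hp,
    eLpNorm_map_measure measurable_dist.aestronglyMeasurable hf.aemeasurable]
  rfl

lemma planCost_map_snd_le_add (hp : 1 ≤ p) (Γ : Measure (X × X × X)) [IsFiniteMeasure Γ] :
    planCost p (Γ.map Prod.snd) ≤
      planCost p (Γ.map fun w ↦ (w.1, w.2.1)) + planCost p (Γ.map fun w ↦ (w.1, w.2.2)) := by
  have hp₀ : 0 < p := by linarith
  rw [← ENNReal.ofReal_le_ofReal_iff (add_nonneg (planCost_nonneg _ _) (planCost_nonneg _ _)),
    ENNReal.ofReal_add (planCost_nonneg _ _) (planCost_nonneg _ _),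
    ofReal_planCost_map hp₀ Γ measurable_snd, ofReal_planCost_map hp₀ Γ (by fun_prop),
    ofReal_planCost_map hp₀ Γ (by fun_prop)]
  calc eLpNorm (fun w : X × X × X ↦ dist w.2.1 w.2.2) (ENNReal.ofReal p) Γ
      ≤ eLpNorm (fun w : X × X × X ↦ dist w.1 w.2.1 + dist w.1 w.2.2) (ENNReal.ofReal p) Γ := by
        refine eLpNorm_mono_real fun w ↦ ?_
        rw [Real.norm_of_nonneg dist_nonneg]
        exact dist_triangle_left _ _ _
    _ ≤ _ := eLpNorm_add_le (by fun_prop) (by fun_prop) (ENNReal.one_le_ofReal.2 hp)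

lemma rpow_mul_measureReal_le_dist_le (hp : 0 < p) {r : ℝ} (hr : 0 ≤ r) (γ : Measure (X × X))
    [IsFiniteMeasure γ] : r ^ p * γ.real {z | r ≤ dist z.1 z.2} ≤ planCost p γ ^ p := by
  have hint : Integrable (fun z : X × X ↦ dist z.1 z.2 ^ p) γ := by
    simpa only [ENNReal.toReal_ofReal hp.le, Real.norm_of_nonneg dist_nonneg] using
      (memLp_dist (ENNReal.ofReal p) γ).integrable_norm_rpow'
  have hmarkov := mul_meas_ge_le_integral_of_nonneg
    (ae_of_all γ fun z ↦ by positivity) hint (r ^ p)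
  simpa only [planCost_rpow hp, Real.rpow_le_rpow_iff hr dist_nonneg hp] using hmarkov

end PlanCost

section PartialPlan

variable {X : Type*} [MeasurableSpace X] {μ ν κ : Measure X} {α β : ℝ} {γ γ₁ γ₂ : Measure (X × X)}

lemma isPartialPlan_zero (μ ν : Measure X) : IsPartialPlan μ ν 0 0 := by
  simp [IsPartialPlan, Measure.zero_le]

lemma isPartialPlan_map_diag (μ : Measure X) [IsProbabilityMeasure μ] :
    IsPartialPlan μ μ 1 (μ.map fun x ↦ (x, x)) := by
  have hdiag : Measurable fun x : X ↦ (x, x) := by fun_prop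
  refine ⟨?_, ?_, ?_⟩
  · rw [Measure.map_apply hdiag .univ, Set.preimage_univ, measure_univ, ENNReal.ofReal_one]
  · rw [Measure.map_map measurable_fst hdiag]
    exact Measure.map_id.le
  · rw [Measure.map_map measurable_snd hdiag]
    exact Measure.map_id.le

lemma exists_isPartialPlan (μ ν : Measure X) [IsProbabilityMeasure μ] [IsProbabilityMeasure ν]
    (hα : α ≤ 1) : ∃ γ, IsPartialPlan μ ν α γ := by
  obtain ⟨γ, hγ, hmass⟩ := exists_le_measure_univ_eq (m := μ.prod ν) (t := ENNReal.ofReal α)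
    (by rwa [measure_univ, ENNReal.ofReal_le_one])
  refine ⟨γ, hmass, ?_, ?_⟩
  · simpa using Measure.map_mono hγ measurable_fst
  · simpa using Measure.map_mono hγ measurable_snd

namespace IsPartialPlan

lemma isFiniteMeasure (h : IsPartialPlan μ ν α γ) : IsFiniteMeasure γ :=
  ⟨h.1 ▸ ENNReal.ofReal_lt_top⟩

lemma swap (h : IsPartialPlan μ ν α γ) : IsPartialPlan ν μ α (γ.map Prod.swap) := by
  refine ⟨?_, ?_, ?_⟩
  · rw [Measure.map_apply measurable_swap .univ, Set.preimage_univ, h.1]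
  · rw [Measure.map_map measurable_fst measurable_swap]
    exact h.2.2
  · rw [Measure.map_map measurable_snd measurable_swap]
    exact h.2.1

lemma measureReal_le_fst_add [IsProbabilityMeasure μ] (h : IsPartialPlan μ ν α γ) {s : Set X}
    (hs : MeasurableSet s) : μ.real s ≤ γ.real (Prod.fst ⁻¹' s) + (1 - α) := by
  have := h.isFiniteMeasure
  have hcompl : γ.real (Prod.fst ⁻¹' sᶜ) ≤ μ.real sᶜ := by
    rw [← map_measureReal_apply measurable_fst hs.compl]
    exact ENNReal.toReal_mono (measure_ne_top μ _) (h.2.1 _)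
  have hmass : α ≤ γ.real Set.univ := by
    rw [measureReal_def, h.1, ENNReal.toReal_ofReal']
    exact le_max_left α 0
  rw [Set.preimage_compl, measureReal_compl (measurable_fst hs), probReal_compl_eq_one_sub hs]
    at hcompl
  linarith

-- The first coordinate of `Γ` is the intermediate point through which mass is carried.
lemma exists_glue [StandardBorelSpace X] [IsProbabilityMeasure κ] (hαβ : 1 ≤ α + β)
    (h₁ : IsPartialPlan μ κ α γ₁) (h₂ : IsPartialPlan κ ν β γ₂) :
    ∃ Γ : Measure (X × X × X), IsPartialPlan μ ν (α + β - 1) (Γ.map Prod.snd) ∧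
      Γ.map (fun w ↦ (w.1, w.2.1)) ≤ γ₁.map Prod.swap ∧ Γ.map (fun w ↦ (w.1, w.2.2)) ≤ γ₂ := by
  have : Nonempty X := nonempty_of_isProbabilityMeasure κ
  have := h₂.isFiniteMeasure
  have := h₁.swap.isFiniteMeasure
  have hoverlap : ENNReal.ofReal (α + β - 1) + κ Set.univ ≤
      (γ₁.map Prod.swap).fst Set.univ + γ₂.fst Set.univ := by
    rw [Measure.fst_univ, Measure.fst_univ, h₁.swap.1, h₂.1, measure_univ, ← ENNReal.ofReal_one,
      ← ENNReal.ofReal_add (by linarith) zero_le_one, sub_add_cancel]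
    exact ENNReal.ofReal_add_le
  obtain ⟨m, hm₁, hm₂, hm⟩ := exists_le_le_measure_univ_eq h₁.swap.2.1 h₂.2.1 hoverlap
  obtain ⟨Γ, hΓ, hΓ₁, hΓ₂⟩ := exists_fst_eq_map_le_map_le hm₁ hm₂
  have hfst : (Γ.map Prod.snd).map Prod.fst = (Γ.map fun w ↦ (w.1, w.2.1)).map Prod.snd := by
    rw [Measure.map_map measurable_fst measurable_snd,
      Measure.map_map measurable_snd (by fun_prop)]
    rfl
  have hsnd : (Γ.map Prod.snd).map Prod.snd = (Γ.map fun w ↦ (w.1, w.2.2)).map Prod.snd := by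
    rw [Measure.map_map measurable_snd measurable_snd,
      Measure.map_map measurable_snd (by fun_prop)]
    rfl
  refine ⟨Γ, ⟨?_, ?_, ?_⟩, hΓ₁, hΓ₂⟩
  · rw [← Measure.snd, Measure.snd_univ, ← Measure.fst_univ, hΓ, hm]
  · exact hfst.le.trans ((Measure.map_mono hΓ₁ measurable_snd).trans h₁.swap.2.2)
  · exact hsnd.le.trans ((Measure.map_mono hΓ₂ measurable_snd).trans h₂.2.2)

lemma le_one [IsProbabilityMeasure μ] (h : IsPartialPlan μ ν α γ) : α ≤ 1 := by
  have hmass : γ Set.univ ≤ μ Set.univ := by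
    rw [← Measure.fst_univ]
    exact h.2.1 Set.univ
  rwa [h.1, measure_univ, ENNReal.ofReal_le_one] at hmass

variable [MetricSpace X] [OpensMeasurableSpace X]

lemma measureReal_le_thickening_add [IsProbabilityMeasure μ] [IsFiniteMeasure ν]
    (h : IsPartialPlan μ ν α γ) {s : Set X} (hs : MeasurableSet s) (r : ℝ) :
    μ.real s ≤ ν.real (Metric.thickening r s) + (1 - α) + γ.real {z | r ≤ dist z.1 z.2} := by
  have := h.isFiniteMeasure
  have hsub : Prod.fst ⁻¹' s ⊆
      Prod.snd ⁻¹' Metric.thickening r s ∪ {z : X × X | r ≤ dist z.1 z.2} := by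
    rintro ⟨x, y⟩ hx
    refine (lt_or_ge (dist x y) r).imp (fun hxy ↦ ?_) id
    exact Metric.mem_thickening_iff.2 ⟨x, hx, by rwa [dist_comm]⟩
  have hsnd : γ.real (Prod.snd ⁻¹' Metric.thickening r s) ≤ ν.real (Metric.thickening r s) := by
    rw [← map_measureReal_apply measurable_snd Metric.isOpen_thickening.measurableSet]
    exact ENNReal.toReal_mono (measure_ne_top ν _) (h.2.2 _)
  have hfst := (measureReal_mono (μ := γ) hsub).trans (measureReal_union_le _ _)
  linarith [h.measureReal_le_fst_add hs]

variable [SecondCountableTopology X] [BoundedSpace X] {p : ℝ}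

-- The exponent `p / (p + 1)` balances the radius `r` against the mass `(planCost p γ / r) ^ p`
-- that Markov's inequality allows `γ` to move further than `r`.
lemma levyProkhorovDist_le (hp : 0 < p) [IsProbabilityMeasure μ] [IsProbabilityMeasure ν]
    (h : IsPartialPlan μ ν α γ) :
    levyProkhorovDist μ ν ≤ 1 - α + planCost p γ ^ (p / (p + 1)) := by
  have := h.isFiniteMeasure
  have hα : 0 ≤ 1 - α := sub_nonneg.2 h.le_one
  set s := planCost p γ ^ (p / (p + 1))
  have hs : 0 ≤ s := Real.rpow_nonneg (planCost_nonneg p γ) _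
  have hcost : planCost p γ ^ p = s ^ p * s := by
    have hp₁ : p + 1 ≠ 0 := by positivity
    rw [← Real.rpow_add_one' hs hp₁, ← Real.rpow_mul (planCost_nonneg p γ), div_mul_cancel₀ _ hp₁]
  refine levyProkhorovDist_le_of_forall_le μ ν (add_nonneg hα hs) fun r B hr hB ↦ ?_
  have hsr : s < r := by linarith
  have hr₀ : 0 < r := hs.trans_lt hsr
  have hfar : γ.real {z | r ≤ dist z.1 z.2} ≤ s := by
    refine le_of_mul_le_mul_left ?_ (Real.rpow_pos_of_pos hr₀ p)
    calc r ^ p * γ.real {z | r ≤ dist z.1 z.2} ≤ s ^ p * s :=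
          (rpow_mul_measureReal_le_dist_le hp hr₀.le γ).trans_eq hcost
      _ ≤ r ^ p * s := by gcongr
  have hreal : μ.real B ≤ ν.real (Metric.thickening r B) + r := by
    linarith [h.measureReal_le_thickening_add hB r]
  rw [← ofReal_measureReal (μ := μ), ← ofReal_measureReal (μ := ν),
    ← ENNReal.ofReal_add measureReal_nonneg hr₀.le]
  exact ENNReal.ofReal_le_ofReal hreal

variable [StandardBorelSpace X]

lemma exists_trans [IsProbabilityMeasure κ] (hp : 1 ≤ p) (hαβ : 1 ≤ α + β)
    (h₁ : IsPartialPlan μ κ α γ₁) (h₂ : IsPartialPlan κ ν β γ₂) :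
    ∃ γ, IsPartialPlan μ ν (α + β - 1) γ ∧ planCost p γ ≤ planCost p γ₁ + planCost p γ₂ := by
  have hp₀ : 0 < p := by linarith
  have := h₂.isFiniteMeasure
  have := h₁.swap.isFiniteMeasure
  obtain ⟨Γ, hΓ, hΓ₁, hΓ₂⟩ := exists_glue hαβ h₁ h₂
  have := hΓ.isFiniteMeasure
  have : IsFiniteMeasure Γ := Measure.isFiniteMeasure_of_map measurable_snd.aemeasurable
  refine ⟨Γ.map Prod.snd, hΓ, ?_⟩
  calc planCost p (Γ.map Prod.snd)
      ≤ planCost p (Γ.map fun w ↦ (w.1, w.2.1)) + planCost p (Γ.map fun w ↦ (w.1, w.2.2)) :=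
        planCost_map_snd_le_add hp Γ
    _ ≤ planCost p (γ₁.map Prod.swap) + planCost p γ₂ :=
        add_le_add (planCost_mono hp₀ hΓ₁) (planCost_mono hp₀ hΓ₂)
    _ = planCost p γ₁ + planCost p γ₂ := by rw [planCost_map_swap]

end IsPartialPlan

end PartialPlan

section PartialWasserstein

variable {X : Type*} [MetricSpace X] [MeasurableSpace X] {μ ν κ : Measure X} {p α β : ℝ}

lemma partialW_nonneg (p α : ℝ) (μ ν : Measure X) : 0 ≤ partialW p α μ ν := by
  refine Real.sInf_nonneg ?_
  rintro _ ⟨γ, -, rfl⟩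
  exact planCost_nonneg p γ

lemma partialW_le_planCost {γ : Measure (X × X)} (h : IsPartialPlan μ ν α γ) :
    partialW p α μ ν ≤ planCost p γ := by
  refine csInf_le ⟨0, ?_⟩ ⟨γ, h, rfl⟩
  rintro _ ⟨γ', -, rfl⟩
  exact planCost_nonneg p γ'

lemma exists_planCost_lt_of_partialW_lt [IsProbabilityMeasure μ] [IsProbabilityMeasure ν] {c : ℝ}
    (hα : α ≤ 1) (h : partialW p α μ ν < c) :
    ∃ γ, IsPartialPlan μ ν α γ ∧ planCost p γ < c := by
  obtain ⟨γ₀, hγ₀⟩ := exists_isPartialPlan μ ν hα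
  have hne : {c : ℝ | ∃ γ, IsPartialPlan μ ν α γ ∧ c = planCost p γ}.Nonempty := ⟨_, γ₀, hγ₀, rfl⟩
  obtain ⟨_, ⟨γ, hγ, rfl⟩, hlt⟩ := exists_lt_of_csInf_lt hne h
  exact ⟨γ, hγ, hlt⟩

lemma partialW_zero (hp : 0 < p) (μ ν : Measure X) : partialW p 0 μ ν = 0 :=
  le_antisymm ((partialW_le_planCost (isPartialPlan_zero μ ν)).trans_eq (planCost_zero hp))
    (partialW_nonneg p 0 μ ν)

variable [OpensMeasurableSpace X] [SecondCountableTopology X]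

lemma partialW_one_self (hp : 0 < p) (μ : Measure X) [IsProbabilityMeasure μ] :
    partialW p 1 μ μ = 0 :=
  le_antisymm ((partialW_le_planCost (isPartialPlan_map_diag μ)).trans_eq (planCost_map_diag hp μ))
    (partialW_nonneg p 1 μ μ)

lemma partialW_comm (p α : ℝ) (μ ν : Measure X) : partialW p α μ ν = partialW p α ν μ := by
  unfold partialW
  congr 1
  ext c
  constructor <;> rintro ⟨γ, hγ, rfl⟩ <;> exact ⟨_, hγ.swap, (planCost_map_swap p γ).symm⟩

variable [BoundedSpace X]

lemma levyProkhorovDist_le_partialW [IsProbabilityMeasure μ] [IsProbabilityMeasure ν] (hp : 0 < p)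
    (hα : α ≤ 1) : levyProkhorovDist μ ν ≤ 1 - α + partialW p α μ ν ^ (p / (p + 1)) := by
  have hexp : 0 ≤ p / (p + 1) := by positivity
  let f : ℝ → ℝ := fun c ↦ 1 - α + c ^ (p / (p + 1))
  have hf : Continuous f := continuous_const.add (Real.continuous_rpow_const hexp)
  refine le_apply_of_forall_gt (f := f) hf.continuousWithinAt fun c hc ↦ ?_
  obtain ⟨γ, hγ, hlt⟩ := exists_planCost_lt_of_partialW_lt hα hc
  calc levyProkhorovDist μ ν ≤ f (planCost p γ) := hγ.levyProkhorovDist_le hp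
    _ ≤ f c := by
        dsimp only [f]
        gcongr
        exact planCost_nonneg p γ

lemma partialW_triangle [StandardBorelSpace X] [IsProbabilityMeasure μ] [IsProbabilityMeasure ν]
    [IsProbabilityMeasure κ] (hp : 1 ≤ p) (hα : α ≤ 1) (hβ : β ≤ 1) (hαβ : 1 ≤ α + β) :
    partialW p (α + β - 1) μ ν ≤ partialW p α μ κ + partialW p β κ ν := by
  refine le_add_of_forall_lt fun c₁ hc₁ c₂ hc₂ ↦ ?_
  obtain ⟨γ₁, hγ₁, hlt₁⟩ := exists_planCost_lt_of_partialW_lt hα hc₁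
  obtain ⟨γ₂, hγ₂, hlt₂⟩ := exists_planCost_lt_of_partialW_lt hβ hc₂
  obtain ⟨γ, hγ, hle⟩ := hγ₁.exists_trans hp hαβ hγ₂
  calc partialW p (α + β - 1) μ ν ≤ planCost p γ := partialW_le_planCost hγ
    _ ≤ planCost p γ₁ + planCost p γ₂ := hle
    _ ≤ c₁ + c₂ := add_le_add hlt₁.le hlt₂.le

end PartialWasserstein

section RPW

variable {X : Type*} [MetricSpace X] [MeasurableSpace X] {μ ν κ : Measure X} {p k : ℝ}

lemma RPW_nonneg (p k : ℝ) (μ ν : Measure X) : 0 ≤ RPW p k μ ν :=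
  Real.sInf_nonneg fun _ hε ↦ hε.1.1

lemma RPW_le {ε : ℝ} (hε : ε ∈ Set.Icc (0 : ℝ) 1) (h : partialW p (1 - ε) μ ν ≤ k * ε) :
    RPW p k μ ν ≤ ε :=
  csInf_le ⟨0, fun _ hε' ↦ hε'.1.1⟩ ⟨hε, h⟩

lemma RPW_le_one (hp : 0 < p) (hk : 0 ≤ k) (μ ν : Measure X) : RPW p k μ ν ≤ 1 :=
  RPW_le ⟨zero_le_one, le_rfl⟩ (by rwa [sub_self, partialW_zero hp, mul_one])

lemma exists_lt_of_RPW_lt (hp : 0 < p) (hk : 0 ≤ k) {r : ℝ} (h : RPW p k μ ν < r) :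
    ∃ ε ∈ Set.Icc (0 : ℝ) 1, partialW p (1 - ε) μ ν ≤ k * ε ∧ ε < r := by
  have hone : partialW p (1 - 1) μ ν ≤ k * 1 := by rwa [sub_self, partialW_zero hp, mul_one]
  have hne : {ε : ℝ | ε ∈ Set.Icc (0 : ℝ) 1 ∧ partialW p (1 - ε) μ ν ≤ k * ε}.Nonempty :=
    ⟨1, ⟨zero_le_one, le_rfl⟩, hone⟩
  obtain ⟨ε, ⟨hε, hW⟩, hlt⟩ := exists_lt_of_csInf_lt hne h
  exact ⟨ε, hε, hW, hlt⟩

variable [SecondCountableTopology X]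

lemma RPW_self [OpensMeasurableSpace X] (hp : 0 < p) (k : ℝ) (μ : Measure X)
    [IsProbabilityMeasure μ] : RPW p k μ μ = 0 := by
  refine le_antisymm (RPW_le ⟨le_rfl, zero_le_one⟩ ?_) (RPW_nonneg p k μ μ)
  rw [sub_zero, partialW_one_self hp, mul_zero]

lemma RPW_comm [OpensMeasurableSpace X] (p k : ℝ) (μ ν : Measure X) :
    RPW p k μ ν = RPW p k ν μ := by
  simp only [RPW, partialW_comm p _ μ ν]

variable [BoundedSpace X]

lemma levyProkhorovDist_le_RPW [OpensMeasurableSpace X] [IsProbabilityMeasure μ]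
    [IsProbabilityMeasure ν] (hp : 0 < p) (hk : 0 ≤ k) :
    levyProkhorovDist μ ν ≤ RPW p k μ ν + (k * RPW p k μ ν) ^ (p / (p + 1)) := by
  have hexp : 0 ≤ p / (p + 1) := by positivity
  let f : ℝ → ℝ := fun r ↦ r + (k * r) ^ (p / (p + 1))
  have hf : Continuous f :=
    continuous_id.add ((continuous_const_mul k).rpow_const fun _ ↦ .inr hexp)
  refine le_apply_of_forall_gt (f := f) hf.continuousWithinAt fun r hr ↦ ?_
  obtain ⟨ε, hε, hW, hlt⟩ := exists_lt_of_RPW_lt hp hk hr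
  calc levyProkhorovDist μ ν ≤ 1 - (1 - ε) + partialW p (1 - ε) μ ν ^ (p / (p + 1)) :=
        levyProkhorovDist_le_partialW hp (sub_le_self 1 hε.1)
    _ ≤ r + (k * r) ^ (p / (p + 1)) := by
        have hW' : partialW p (1 - ε) μ ν ≤ k * r := hW.trans (by gcongr)
        rw [sub_sub_cancel]
        gcongr
        exact partialW_nonneg p _ μ ν

lemma eq_of_RPW_eq_zero [BorelSpace X] [IsProbabilityMeasure μ] [IsProbabilityMeasure ν]
    (hp : 0 < p) (hk : 0 ≤ k) (h : RPW p k μ ν = 0) : μ = ν := by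
  have hexp : p / (p + 1) ≠ 0 := by positivity
  have hle : levyProkhorovDist μ ν ≤ 0 := by
    simpa only [h, mul_zero, Real.zero_rpow hexp, add_zero] using
      levyProkhorovDist_le_RPW (μ := μ) (ν := ν) hp hk
  exact eq_of_levyProkhorovDist_eq_zero (hle.antisymm ENNReal.toReal_nonneg)

lemma RPW_pos [BorelSpace X] [IsProbabilityMeasure μ] [IsProbabilityMeasure ν]
    (hp : 0 < p) (hk : 0 ≤ k) (h : μ ≠ ν) : 0 < RPW p k μ ν :=
  (RPW_nonneg p k μ ν).lt_of_ne' fun h₀ ↦ h (eq_of_RPW_eq_zero hp hk h₀)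

lemma RPW_triangle [OpensMeasurableSpace X] [StandardBorelSpace X] [IsProbabilityMeasure μ]
    [IsProbabilityMeasure ν] [IsProbabilityMeasure κ] (hp : 1 ≤ p) (hk : 0 ≤ k) :
    RPW p k μ ν ≤ RPW p k μ κ + RPW p k κ ν := by
  have hp₀ : 0 < p := by linarith
  refine le_add_of_forall_lt fun r₁ hr₁ r₂ hr₂ ↦ ?_
  obtain ⟨ε₁, hε₁, hW₁, hlt₁⟩ := exists_lt_of_RPW_lt hp₀ hk hr₁
  obtain ⟨ε₂, hε₂, hW₂, hlt₂⟩ := exists_lt_of_RPW_lt hp₀ hk hr₂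
  suffices h : RPW p k μ ν ≤ ε₁ + ε₂ from h.trans (add_le_add hlt₁.le hlt₂.le)
  rcases le_total (ε₁ + ε₂) 1 with hle | hge
  · refine RPW_le ⟨add_nonneg hε₁.1 hε₂.1, hle⟩ ?_
    calc partialW p (1 - (ε₁ + ε₂)) μ ν = partialW p (1 - ε₁ + (1 - ε₂) - 1) μ ν := by
          congr 1
          ring
      _ ≤ partialW p (1 - ε₁) μ κ + partialW p (1 - ε₂) κ ν :=
          partialW_triangle hp (sub_le_self 1 hε₁.1) (sub_le_self 1 hε₂.1) (by linarith)
      _ ≤ k * ε₁ + k * ε₂ := add_le_add hW₁ hW₂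
      _ = k * (ε₁ + ε₂) := (mul_add k ε₁ ε₂).symm
  · exact (RPW_le_one hp₀ hk μ ν).trans hge

end RPW

theorem rpw_is_metric_general
    {X : Type*} [MetricSpace X] [BoundedSpace X] [SecondCountableTopology X] [MeasurableSpace X]
    [BorelSpace X] [StandardBorelSpace X] (p k : ℝ) (hp : 1 ≤ p) (hk : 0 ≤ k) :
    (∀ μ : Measure X, IsProbabilityMeasure μ → RPW p k μ μ = 0) ∧
    (∀ μ ν : Measure X, IsProbabilityMeasure μ → IsProbabilityMeasure ν →
      μ ≠ ν → 0 < RPW p k μ ν) ∧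
    (∀ μ ν : Measure X, IsProbabilityMeasure μ → IsProbabilityMeasure ν →
      RPW p k μ ν = RPW p k ν μ) ∧
    (∀ μ ν κ : Measure X, IsProbabilityMeasure μ → IsProbabilityMeasure ν →
      IsProbabilityMeasure κ → RPW p k μ ν ≤ RPW p k μ κ + RPW p k κ ν) := by
  have hp₀ : 0 < p := by linarith
  exact ⟨fun μ _ ↦ RPW_self hp₀ k μ, fun _ _ _ _ hne ↦ RPW_pos hp₀ hk hne,
    fun μ ν _ _ ↦ RPW_comm p k μ ν, fun _ _ _ _ _ _ ↦ RPW_triangle hp hk⟩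

/-- For `p ≥ 1` and `k ≥ 0`, the `(p,k)`-RPW distance is a metric on
Borel probability measures on a compact metric space `X` of unit diameter. -/
theorem rpw_is_metric
    {X : Type*} [MetricSpace X] [CompactSpace X] [MeasurableSpace X] [BorelSpace X]
    (hdiam : ∀ a b : X, dist a b ≤ 1)
    (p k : ℝ) (hp : 1 ≤ p) (hk : 0 ≤ k) :
    (∀ μ : Measure X, IsProbabilityMeasure μ → RPW p k μ μ = 0) ∧
    (∀ μ ν : Measure X, IsProbabilityMeasure μ → IsProbabilityMeasure ν →
      μ ≠ ν → 0 < RPW p k μ ν) ∧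
    (∀ μ ν : Measure X, IsProbabilityMeasure μ → IsProbabilityMeasure ν →
      RPW p k μ ν = RPW p k ν μ) ∧
    (∀ μ ν κ : Measure X, IsProbabilityMeasure μ → IsProbabilityMeasure ν →
      IsProbabilityMeasure κ → RPW p k μ ν ≤ RPW p k μ κ + RPW p k κ ν) :=
  rpw_is_metric_general p k hp hk
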